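/- arXiv:1702.07242 — 6 statements merged into one kernel-verified Lean document; each statement's English description precedes it below -/
import Mathlib

section
/- Let (L, E, U) be an LEU-decomposition of a matrix A ∈ F_{I,J}. Then the inverse matrices satisfy L⁻¹ = (𝟙 − I_E) + L⁻¹ I_E and U⁻¹ = (𝟙 − J_E) + J_E U⁻¹. -/
open Matrix

/-- `P_n`: matrices all of whose entries lie in `{0,1}`, with at most one nonzero
entry in each row and at most one nonzero entry in each column. -/
def InP {F : Type*} [Field F] {m : Type*} (E : Matrix m m F) : Prop :=
  (∀ i j, E i j = 0 ∨ E i j = 1) ∧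
  (∀ i j k, E i j ≠ 0 → E i k ≠ 0 → j = k) ∧
  (∀ i j k, E i j ≠ 0 → E k j ≠ 0 → i = k)

/-- `D_n`: diagonal matrices with diagonal entries in `{0,1}`. -/
def InD {F : Type*} [Field F] {m : Type*} (M : Matrix m m F) : Prop :=
  M.IsDiag ∧ ∀ i, M i i = 0 ∨ M i i = 1

/-- `F_{I,J}`: the set of matrices `B` with `I * B * J = B`. -/
def InFIJ {F : Type*} [Field F] {n : ℕ} (I J B : Matrix (Fin n) (Fin n) F) : Prop :=
  I * B * J = B

/-- `(L, E, U)` is an LEU-decomposition of `A ∈ F_{I,J}`: `A = L⁻¹ * E * U⁻¹`,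
`E ∈ P_n`, `L` is an invertible lower triangular matrix, `U` is an upper
triangular matrix with unit diagonal, `L - (𝟙 - I_E) ∈ F_{I, I_E}` and
`U - (𝟙 - J_E) ∈ F_{J_E, J}`, where `I_E = E * Eᵀ` and `J_E = Eᵀ * E`. -/
def IsLEU {F : Type*} [Field F] {n : ℕ}
    (I J A L E U : Matrix (Fin n) (Fin n) F) : Prop :=
  A = L⁻¹ * E * U⁻¹ ∧ InP E ∧ IsUnit L ∧
  (∀ i j : Fin n, i < j → L i j = 0) ∧
  (∀ i j : Fin n, j < i → U i j = 0) ∧ (∀ i, U i i = 1) ∧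
  InFIJ I (E * Eᵀ) (L - (1 - E * Eᵀ)) ∧
  InFIJ (Eᵀ * E) J (U - (1 - Eᵀ * E))

theorem idem_aux {F : Type*} [Field F] {n : ℕ} (E : Matrix (Fin n) (Fin n) F) (h : InP E) :
    (E * Eᵀ) * (E * Eᵀ) = E * Eᵀ := by
  obtain ⟨h1, h2, h3⟩ := h
  have hd : E * Eᵀ = Matrix.diagonal (fun i => ∑ j, E i j * E i j) := by
    ext i k
    rw [Matrix.mul_apply, Matrix.diagonal_apply]
    simp only [Matrix.transpose_apply]
    split_ifs with hik
    · subst hik; rfl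
    · apply Finset.sum_eq_zero
      intro j _
      by_contra hne
      exact hik (h3 i j k (left_ne_zero_of_mul hne) (right_ne_zero_of_mul hne))
  rw [hd, Matrix.diagonal_mul_diagonal]
  congr 1
  funext i
  by_cases hex : ∃ j, E i j ≠ 0
  · obtain ⟨j, hj⟩ := hex
    have h11 : E i j = 1 := (h1 i j).resolve_left hj
    have : ∑ k, E i k * E i k = 1 := by
      rw [Finset.sum_eq_single j]
      · simp [h11]
      · intro k _ hk
        by_contra hne
        exact hk (h2 i k j (left_ne_zero_of_mul hne) hj)
      · simp
    rw [this, one_mul]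
  · push Not at hex
    simp [hex]

theorem InP.transpose_aux {F : Type*} [Field F] {n : ℕ} {E : Matrix (Fin n) (Fin n) F}
    (h : InP E) : InP Eᵀ :=
  ⟨fun i j => h.1 j i, fun i j k => h.2.2 j i k, fun i j k => h.2.1 j i k⟩

/-- Sentence 1 (second part): if `(L,E,U)` is an LEU-decomposition of
`A ∈ F_{I,J}`, then `L⁻¹ = (𝟙 - I_E) + L⁻¹·I_E` and `U⁻¹ = (𝟙 - J_E) + J_E·U⁻¹`. -/
theorem leu_inv_blocks {F : Type*} [Field F] {n : ℕ} (hn : 0 < n)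
    (I J A L E U : Matrix (Fin n) (Fin n) F)
    (hI : InD I) (hJ : InD J) (hA : InFIJ I J A)
    (hLEU : IsLEU I J A L E U) :
    L⁻¹ = (1 - E * Eᵀ) + L⁻¹ * (E * Eᵀ) ∧
    U⁻¹ = (1 - Eᵀ * E) + (Eᵀ * E) * U⁻¹ := by
  obtain ⟨-, hE, hL, -, hU0, hU1, hLI, hUJ⟩ := hLEU
  have hP := idem_aux E hE
  have hQ := idem_aux Eᵀ hE.transpose_aux
  rw [Matrix.transpose_transpose] at hQ
  have hLd : IsUnit L.det := (Matrix.isUnit_iff_isUnit_det L).1 hL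
  have hUd : IsUnit U.det := by
    have ht : U.BlockTriangular id := fun i j hij => hU0 i j hij
    rw [Matrix.det_of_upperTriangular ht]
    simp [hU1]
  unfold InFIJ at hLI hUJ
  generalize E * Eᵀ = P at *
  generalize Eᵀ * E = Q at *
  constructor
  · have h0 : (L - (1 - P)) * (1 - P) = 0 := by
      rw [← hLI, mul_assoc, mul_sub P, mul_one, hP, sub_self, mul_zero]
    have h1 : L * (1 - P) = 1 - P := by
      have h2 : (1 - P) * (1 - P) = 1 - P := by
        simp [mul_sub, sub_mul, hP]
      rw [sub_mul, h2] at h0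
      exact sub_eq_zero.1 h0
    have h3 : L⁻¹ * (1 - P) = 1 - P := by
      conv_lhs => rw [← h1]
      exact Matrix.nonsing_inv_mul_cancel_left L _ hLd
    rw [← h3, ← mul_add]; simp
  · have h0 : (1 - Q) * (U - (1 - Q)) = 0 := by
      rw [← hUJ, ← mul_assoc, ← mul_assoc, sub_mul, one_mul, hQ, sub_self, zero_mul, zero_mul]
    have h1 : (1 - Q) * U = 1 - Q := by
      have h2 : (1 - Q) * (1 - Q) = 1 - Q := by
        simp [mul_sub, sub_mul, hQ]
      rw [mul_sub, h2] at h0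
      exact sub_eq_zero.1 h0
    have h3 : (1 - Q) * U⁻¹ = 1 - Q := by
      conv_lhs => rw [← h1]
      exact Matrix.mul_nonsing_inv_cancel_right U _ hUd
    rw [← h3, ← add_mul]; simp
end

section
/- Let E₁₁, E₁₂, E₂₁, E₂₂ ∈ P_n satisfy E₂₁ = E₂₁(𝟙 − J₁₁), E₁₂ = (𝟙 − I₁₁)E₁₂, and E₂₂ = (𝟙 − I₂₁)E₂₂(𝟙 − J₁₂), where I_{ij} = E_{ij}E_{ij}ᵀ and J_{ij} = E_{ij}ᵀE_{ij}. Then the 2n×2n block matrix E = [[E₁₁, E₁₂],[E₂₁, E₂₂]] belongs to P_{2n}, and the following identities hold: E₁₁E₂₁ᵀ = 0, E₁₂ᵀE₁₁ = 0, E₁₂E₂₂ᵀ = 0, and E₂₂ᵀE₂₁ = 0. -/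
open Matrix

/-- A `2n×2n` matrix built from four `n×n` blocks, indexed by `Fin (n+n)`. -/
def blk {F : Type*} [Field F] {n : ℕ} (A B C D : Matrix (Fin n) (Fin n) F) :
    Matrix (Fin (n + n)) (Fin (n + n)) F :=
  (Matrix.fromBlocks A B C D).submatrix finSumFinEquiv.symm finSumFinEquiv.symm

theorem InP.mul_aux {F : Type*} [Field F] {n : ℕ} {E : Matrix (Fin n) (Fin n) F}
    (h : InP E) : E * Eᵀ * E = E := by
  obtain ⟨h0, h1, h2⟩ := h
  ext i j
  simp only [Matrix.mul_apply, Matrix.transpose_apply, Finset.sum_mul]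
  have key : ∀ l k, E i k * E l k * E l j
      = if l = i then (if k = j then E i j else 0) else 0 := by
    intro l k
    by_cases a : E i k = 0
    · split_ifs with hl hk
      · subst hk; simp [a]
      · simp [a]
      · simp [a]
    by_cases b : E l k = 0
    · split_ifs with hl hk
      · subst hl; exact absurd b a
      · simp [b]
      · simp [b]
    have hli := h2 _ _ _ b a
    subst hli
    by_cases c : E l j = 0
    · simp [c]
    have hkj := h1 _ _ _ a c
    subst hkj
    rcases h0 l k with h | h <;> simp [h]
  simp [key]

theorem InP.disj_aux {F : Type*} [Field F] {n : ℕ} {A B : Matrix (Fin n) (Fin n) F}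
    (hA : InP A) (h : A * Bᵀ = 0) (i j k : Fin n)
    (a : A i j ≠ 0) (b : B k j ≠ 0) : False := by
  have e := congrFun (congrFun h i) k
  simp only [Matrix.mul_apply, Matrix.transpose_apply, Matrix.zero_apply] at e
  rw [Finset.sum_eq_single j] at e
  · exact mul_ne_zero a b e
  · intro l _ hl
    by_cases c : A i l = 0
    · simp [c]
    · exact absurd (hA.2.1 _ _ _ c a) hl
  · simp

/-- If `E₁₁, E₁₂, E₂₁, E₂₂ ∈ P_n` satisfy `E₂₁ = E₂₁(𝟙 - J₁₁)`,
`E₁₂ = (𝟙 - I₁₁)E₁₂` and `E₂₂ = (𝟙 - I₂₁)E₂₂(𝟙 - J₁₂)` (where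
`I_{ij} = E_{ij}E_{ij}ᵀ`, `J_{ij} = E_{ij}ᵀE_{ij}`), then the block matrix
`E = [[E₁₁,E₁₂],[E₂₁,E₂₂]]` belongs to `P_{2n}`, and
`E₁₁E₂₁ᵀ = 0`, `E₁₂ᵀE₁₁ = 0`, `E₁₂E₂₂ᵀ = 0`, `E₂₂ᵀE₂₁ = 0`. -/
theorem blockE_inP {F : Type*} [Field F] {n : ℕ} (hn : 0 < n)
    (E₁₁ E₁₂ E₂₁ E₂₂ : Matrix (Fin n) (Fin n) F)
    (h11 : InP E₁₁) (h12 : InP E₁₂) (h21 : InP E₂₁) (h22 : InP E₂₂)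
    (he21 : E₂₁ = E₂₁ * (1 - E₁₁ᵀ * E₁₁))
    (he12 : E₁₂ = (1 - E₁₁ * E₁₁ᵀ) * E₁₂)
    (he22 : E₂₂ = (1 - E₂₁ * E₂₁ᵀ) * E₂₂ * (1 - E₁₂ᵀ * E₁₂)) :
    InP (blk E₁₁ E₁₂ E₂₁ E₂₂) ∧
    E₁₁ * E₂₁ᵀ = 0 ∧ E₁₂ᵀ * E₁₁ = 0 ∧ E₁₂ * E₂₂ᵀ = 0 ∧ E₂₂ᵀ * E₂₁ = 0 := by
  have t11 : E₁₁ᵀ * E₁₁ * E₁₁ᵀ = E₁₁ᵀ := by simpa using h11.transpose_aux.mul_aux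
  have t21 : E₂₁ᵀ * E₂₁ * E₂₁ᵀ = E₂₁ᵀ := by simpa using h21.transpose_aux.mul_aux
  have t12 : E₁₂ᵀ * E₁₂ * E₁₂ᵀ = E₁₂ᵀ := by simpa using h12.transpose_aux.mul_aux
  have a1 : E₂₁ * E₁₁ᵀ = 0 := by
    rw [he21, Matrix.mul_assoc, Matrix.sub_mul, t11]; simp
  have a2 : E₁₁ᵀ * E₁₂ = 0 := by
    rw [he12, ← Matrix.mul_assoc, Matrix.mul_sub, ← Matrix.mul_assoc, t11]; simp
  have a3 : E₂₂ * E₁₂ᵀ = 0 := by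
    have z : (1 - E₁₂ᵀ * E₁₂) * E₁₂ᵀ = 0 := by rw [Matrix.sub_mul, t12]; simp
    rw [he22, Matrix.mul_assoc, z, Matrix.mul_zero]
  have a4 : E₂₁ᵀ * E₂₂ = 0 := by
    have z : E₂₁ᵀ * (1 - E₂₁ * E₂₁ᵀ) = 0 := by
      rw [Matrix.mul_sub, ← Matrix.mul_assoc, t21]; simp
    rw [he22, ← Matrix.mul_assoc, ← Matrix.mul_assoc, z, Matrix.zero_mul, Matrix.zero_mul]
  have b1 : E₁₁ * E₂₁ᵀ = 0 := by simpa using congrArg Matrix.transpose a1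
  have b2 : E₁₂ᵀ * E₁₁ = 0 := by simpa using congrArg Matrix.transpose a2
  have b3 : E₁₂ * E₂₂ᵀ = 0 := by simpa using congrArg Matrix.transpose a3
  have b4 : E₂₂ᵀ * E₂₁ = 0 := by simpa using congrArg Matrix.transpose a4
  refine ⟨?_, b1, b2, b3, b4⟩
  have d1 := h11.disj_aux b1
  have d2 : ∀ i j k, E₁₂ j i ≠ 0 → E₁₁ j k ≠ 0 → False := fun i j k =>
    h12.transpose_aux.disj_aux (B := E₁₁ᵀ) (by simpa using b2) i j k
  have d3 := h12.disj_aux b3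
  have d4 : ∀ i j k, E₂₂ j i ≠ 0 → E₂₁ j k ≠ 0 → False := fun i j k =>
    h22.transpose_aux.disj_aux (B := E₂₁ᵀ) (by simpa using b4) i j k
  have key : InP (Matrix.fromBlocks E₁₁ E₁₂ E₂₁ E₂₂) := by
    refine ⟨?_, ?_, ?_⟩
    · rintro (i | i) (j | j)
      exacts [h11.1 i j, h12.1 i j, h21.1 i j, h22.1 i j]
    · rintro (i | i) (j | j) (k | k) a b
      · exact congrArg _ (h11.2.1 _ _ _ a b)
      · exact (d2 _ _ _ b a).elim
      · exact (d2 _ _ _ a b).elim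
      · exact congrArg _ (h12.2.1 _ _ _ a b)
      · exact congrArg _ (h21.2.1 _ _ _ a b)
      · exact (d4 _ _ _ b a).elim
      · exact (d4 _ _ _ a b).elim
      · exact congrArg _ (h22.2.1 _ _ _ a b)
    · rintro (i | i) (j | j) (k | k) a b
      · exact congrArg _ (h11.2.2 _ _ _ a b)
      · exact (d1 _ _ _ a b).elim
      · exact congrArg _ (h12.2.2 _ _ _ a b)
      · exact (d3 _ _ _ a b).elim
      · exact (d1 _ _ _ b a).elim
      · exact congrArg _ (h21.2.2 _ _ _ a b)
      · exact (d3 _ _ _ b a).elim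
      · exact congrArg _ (h22.2.2 _ _ _ a b)
  exact ⟨fun i j => key.1 _ _,
    fun i j k a b => finSumFinEquiv.symm.injective (key.2.1 _ _ _ a b),
    fun i j k a b => finSumFinEquiv.symm.injective (key.2.2 _ _ _ a b)⟩
end

section
/- For every n×n matrix A over a field F with n = 2^k for some k ≥ 0, there exists an LEU-decomposition of A (taking I = J = 𝟙): there exist an invertible lower triangular matrix L, a matrix E ∈ P_n, and an upper triangular matrix U with unit diagonal such that A = L⁻¹ E U⁻¹, L − (𝟙 − I_E) ∈ F_{𝟙, I_E}, and U − (𝟙 − J_E) ∈ F_{J_E, 𝟙}. -/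
open Matrix

lemma leuaux_inv_lower {F : Type*} [Field F] {n : ℕ} (L : Matrix (Fin n) (Fin n) F)
    (hL : IsUnit L) (hl : ∀ i j : Fin n, i < j → L i j = 0) :
    (∀ i j : Fin n, i < j → L⁻¹ i j = 0) ∧ ∀ i, L i i * L⁻¹ i i = 1 := by
  have hb : L.BlockTriangular OrderDual.toDual := fun i j h => hl i j h
  haveI := hL.invertible
  have h1 : ∀ i j : Fin n, i < j → L⁻¹ i j = 0 := fun i j h =>
    blockTriangular_inv_of_blockTriangular hb h
  refine ⟨h1, fun i => ?_⟩
  have h2 : (L * L⁻¹) i i = 1 := by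
    rw [Matrix.mul_nonsing_inv _ ((Matrix.isUnit_iff_isUnit_det _).1 hL)]; simp
  rw [Matrix.mul_apply, Finset.sum_eq_single i] at h2
  · exact h2
  · intro k _ hk
    rcases lt_or_gt_of_ne hk with h | h
    · rw [h1 k i h, mul_zero]
    · rw [hl i k h, zero_mul]
  · simp

lemma leuaux_unit_lower {F : Type*} [Field F] {n : ℕ} (L : Matrix (Fin n) (Fin n) F)
    (hl : ∀ i j : Fin n, i < j → L i j = 0) (hd : ∀ i, L i i ≠ 0) : IsUnit L := by
  rw [Matrix.isUnit_iff_isUnit_det, Matrix.det_of_lowerTriangular L (fun i j h => hl i j h),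
    isUnit_iff_ne_zero]
  exact Finset.prod_ne_zero_iff.2 fun i _ => hd i

lemma leuaux_P {F : Type*} [Field F] {n : ℕ} (E : Matrix (Fin n) (Fin n) F) (hE : InP E) :
    ∃ d : Fin n → F, (∀ i, d i = 0 ∨ d i = 1) ∧ E * Eᵀ = diagonal d ∧ E * Eᵀ * E = E := by
  obtain ⟨h01, hr, hc⟩ := hE
  classical
  have key : E * Eᵀ = diagonal (fun i => if ∃ k, E i k ≠ 0 then (1 : F) else 0) := by
    ext i j
    rw [Matrix.mul_apply]
    by_cases hij : i = j
    · subst hij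
      rw [diagonal_apply_eq]
      split_ifs with h
      · obtain ⟨k, hk⟩ := h
        rw [Finset.sum_eq_single k]
        · have := (h01 i k).resolve_left hk
          simp [this]
        · intro b _ hb
          have : E i b = 0 := by
            by_contra h; exact hb (hr i b k h hk)
          simp [this]
        · simp
      · push Not at h
        exact Finset.sum_eq_zero fun k _ => by simp [h k]
    · rw [diagonal_apply_ne _ hij]
      refine Finset.sum_eq_zero fun k _ => ?_
      rw [transpose_apply]
      by_contra h
      exact hij (hc i k j (left_ne_zero_of_mul h) (right_ne_zero_of_mul h))
  refine ⟨_, fun i => ?_, key, ?_⟩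
  · split_ifs <;> simp
  · rw [key]
    ext i j
    rw [diagonal_mul]
    split_ifs with h
    · simp
    · push Not at h
      simp [h j]

lemma leuaux_fix {F : Type*} [Field F] {n : ℕ} (E L : Matrix (Fin n) (Fin n) F) (hE : InP E)
    (hl : ∀ i j : Fin n, i < j → L i j = 0) (hd : ∀ i, L i i ≠ 0) :
    ∃ M : Matrix (Fin n) (Fin n) F, IsUnit M ∧ (∀ i j : Fin n, i < j → M i j = 0) ∧
      M⁻¹ * E = L⁻¹ * E ∧ ((∀ i, L i i = 1) → ∀ i, M i i = 1) ∧
      (M - (1 - E * Eᵀ)) * (E * Eᵀ) = M - (1 - E * Eᵀ) := by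
  have hLu := leuaux_unit_lower L hl hd
  obtain ⟨hl', hd'⟩ := leuaux_inv_lower L hLu hl
  obtain ⟨d, h01, hI, hIE⟩ := leuaux_P E hE
  have hII : (E * Eᵀ) * (E * Eᵀ) = E * Eᵀ := by
    rw [← Matrix.mul_assoc, hIE]
  set I := E * Eᵀ with hIdef
  set K := (1 - I) + L⁻¹ * I with hK
  have hKl : ∀ i j : Fin n, i < j → K i j = 0 := by
    intro i j h
    simp [hK, hI, Matrix.one_apply, h.ne, hl' i j h, diagonal_apply]
  have hKd : ∀ i, K i i = (1 - d i) + L⁻¹ i i * d i := by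
    intro i; simp [hK, hI]
  have hKd0 : ∀ i, K i i ≠ 0 := by
    intro i
    rw [hKd]
    rcases h01 i with h | h
    · simp [h]
    · have := right_ne_zero_of_mul (by rw [hd' i]; exact one_ne_zero : L i i * L⁻¹ i i ≠ 0)
      simpa [h] using this
  have hKu := leuaux_unit_lower K hKl hKd0
  obtain ⟨hM, hMd⟩ := leuaux_inv_lower K hKu hKl
  have hdet := (Matrix.isUnit_iff_isUnit_det _).1 hKu
  refine ⟨K⁻¹, ?_, hM, ?_, ?_, ?_⟩
  · rw [Matrix.isUnit_nonsing_inv_iff]; exact hKu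
  · rw [Matrix.nonsing_inv_nonsing_inv _ hdet, hK, Matrix.add_mul, Matrix.sub_mul,
      Matrix.mul_assoc L⁻¹, hIE]
    simp
  · intro h1 i
    have e1 := hd' i
    have e2 := hMd i
    rw [h1 i, one_mul] at e1
    rw [hKd, e1] at e2
    simpa using e2
  · have e : K * (1 - I) = 1 - I := by
      rw [hK]
      simp only [Matrix.add_mul, Matrix.sub_mul, Matrix.mul_sub, Matrix.mul_assoc, hII]
      simp
    have e' : K⁻¹ * (1 - I) = 1 - I := by
      conv_lhs => rw [← e]
      rw [← Matrix.mul_assoc, Matrix.nonsing_inv_mul _ hdet, Matrix.one_mul]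
    have e2 : K⁻¹ * I = K⁻¹ - (1 - I) := by
      rw [← e', Matrix.mul_sub, Matrix.mul_one]; abel
    rw [Matrix.sub_mul, e2, Matrix.sub_mul, hII]
    simp

def LeuInv {F : Type*} [Field F] {n : ℕ} (s : ℕ) (B : Matrix (Fin n) (Fin n) F) : Prop :=
  ∀ i j : Fin n, (j : ℕ) < s → B i j ≠ 0 →
    B i j = 1 ∧ (∀ k, k ≠ j → B i k = 0) ∧ (∀ k, k ≠ i → B k j = 0)

lemma leuaux_step {F : Type*} [Field F] {n : ℕ} (s : ℕ) (hs : s < n)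
    (B : Matrix (Fin n) (Fin n) F) (hB : LeuInv s B) :
    ∃ L U : Matrix (Fin n) (Fin n) F, (∀ i j : Fin n, i < j → L i j = 0) ∧ (∀ i, L i i ≠ 0) ∧
      (∀ i j : Fin n, j < i → U i j = 0) ∧ (∀ i, U i i = 1) ∧ LeuInv (s + 1) (L * B * U) := by
  classical
  let t : Fin n := ⟨s, hs⟩
  by_cases hz : ∀ i, B i t = 0
  · refine ⟨1, 1, fun i j h => by simp [h.ne], by simp, fun i j h => by simp [h.ne'], by simp, ?_⟩
    rw [Matrix.one_mul, Matrix.mul_one]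
    intro i j hj hne
    rcases Nat.lt_succ_iff_lt_or_eq.1 hj with h | h
    · exact hB i j h hne
    · exact absurd (by rw [show j = t from Fin.ext h]; exact hz i) hne
  push Not at hz
  obtain ⟨p, hp, hmin⟩ : ∃ p, B p t ≠ 0 ∧ ∀ k, k < p → B k t = 0 := by
    obtain ⟨p, hp, hm⟩ := WellFounded.has_min (wellFounded_lt (α := Fin n)) {i | B i t ≠ 0} hz
    refine ⟨p, hp, fun k hk => ?_⟩
    by_contra h
    exact hm k h hk
  have hrow : ∀ j : Fin n, (j : ℕ) < s → B p j = 0 := by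
    intro j hj
    by_contra h
    exact hp ((hB p j hj h).2.1 t (by rintro rfl; simp [t] at hj))
  let u : Fin n → F := fun k => if k = p then (B p t)⁻¹ - 1 else - B k t * (B p t)⁻¹
  let w : Fin n → F := fun l => if l = t then 0 else - B p l * (B p t)⁻¹
  let L : Matrix (Fin n) (Fin n) F := 1 + vecMulVec u (Pi.single p 1)
  let U : Matrix (Fin n) (Fin n) F := 1 + vecMulVec (Pi.single t 1) w
  have hLB : ∀ k l, (L * B) k l = B k l + u k * B p l := by
    intro k l
    simp only [L, Matrix.add_mul, Matrix.one_mul, Matrix.add_apply]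
    simp [Matrix.mul_apply, vecMulVec_apply, Pi.single_apply]
  have hCU : ∀ (C : Matrix (Fin n) (Fin n) F) k l, (C * U) k l = C k l + C k t * w l := by
    intro C k l
    simp only [U, Matrix.mul_add, Matrix.mul_one, Matrix.add_apply]
    simp [Matrix.mul_apply, vecMulVec_apply, Pi.single_apply]
  have hE : ∀ k l, (L * B * U) k l = B k l + u k * B p l + (B k t + u k * B p t) * w l := by
    intro k l; rw [hCU, hLB, hLB]
  have ft : ∀ k, (L * B * U) k t = if k = p then 1 else 0 := by
    intro k
    rw [hE]
    by_cases hk : k = p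
    · subst hk; simp only [u, w, if_true]; field_simp; ring
    · simp only [u, w, if_true, if_neg hk]; field_simp; ring
  have fp : ∀ l, l ≠ t → (L * B * U) p l = 0 := by
    intro l hl
    rw [hE]
    simp only [u, w, if_true, if_neg hl]; field_simp; ring
  have fc : ∀ k (l : Fin n), (l : ℕ) < s → (L * B * U) k l = B k l := by
    intro k l hl
    rw [hE]
    simp [w, hrow l hl]
  refine ⟨L, U, ?_, ?_, ?_, ?_, ?_⟩
  · intro i j h
    simp only [L, Matrix.add_apply, Matrix.one_apply, vecMulVec_apply, Pi.single_apply, if_neg h.ne]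
    by_cases hj : j = p
    · subst hj; simp [u, h.ne, hmin i h]
    · simp [hj]
  · intro i
    simp only [L, Matrix.add_apply, Matrix.one_apply, vecMulVec_apply, Pi.single_apply]
    by_cases hj : i = p
    · subst hj; simpa [u] using hp
    · simp [hj]
  · intro i j h
    simp only [U, Matrix.add_apply, Matrix.one_apply, vecMulVec_apply, Pi.single_apply, if_neg h.ne']
    by_cases hj : i = t
    · subst hj; simp [w, h.ne, hrow j h]
    · simp [hj]
  · intro i
    simp only [U, Matrix.add_apply, Matrix.one_apply, vecMulVec_apply, Pi.single_apply]
    by_cases hj : i = t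
    · simp [w, hj]
    · simp [hj]
  · intro i j hj hne
    rcases Nat.lt_succ_iff_lt_or_eq.1 hj with h | h
    · rw [fc i j h] at hne ⊢
      obtain ⟨a, b, c⟩ := hB i j h hne
      refine ⟨a, fun k hk => ?_, fun k hk => by rw [fc k j h]; exact c k hk⟩
      have hit : B i t = 0 := b t (by rintro rfl; simp [t] at h)
      have hip : i ≠ p := by rintro rfl; exact hp hit
      rw [hE]
      simp [u, hip, hit, b k hk]
    · obtain rfl : j = t := Fin.ext h
      rw [ft] at hne ⊢
      have hip : i = p := by
        by_contra h'; simp [h'] at hne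
      subst hip
      refine ⟨by simp, fp, fun k hk => by rw [ft]; simp [hk]⟩

lemma leuaux_mul_lower {F : Type*} [Field F] {n : ℕ} (L M : Matrix (Fin n) (Fin n) F)
    (hl : ∀ i j : Fin n, i < j → L i j = 0) (hm : ∀ i j : Fin n, i < j → M i j = 0) :
    (∀ i j : Fin n, i < j → (L * M) i j = 0) ∧ ∀ i, (L * M) i i = L i i * M i i := by
  constructor
  · intro i j h
    rw [Matrix.mul_apply]
    refine Finset.sum_eq_zero fun k _ => ?_
    rcases lt_or_ge i k with h' | h'
    · rw [hl i k h', zero_mul]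
    · rw [hm k j (h'.trans_lt h), mul_zero]
  · intro i
    rw [Matrix.mul_apply, Finset.sum_eq_single i]
    · intro k _ hk
      rcases lt_or_gt_of_ne hk with h | h
      · rw [hm k i h, mul_zero]
      · rw [hl i k h, zero_mul]
    · simp

lemma leuaux_main {F : Type*} [Field F] {n : ℕ} (A : Matrix (Fin n) (Fin n) F) (s : ℕ)
    (hs : s ≤ n) :
    ∃ L U : Matrix (Fin n) (Fin n) F, (∀ i j : Fin n, i < j → L i j = 0) ∧ (∀ i, L i i ≠ 0) ∧
      (∀ i j : Fin n, j < i → U i j = 0) ∧ (∀ i, U i i = 1) ∧ LeuInv s (L * A * U) := by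
  induction s with
  | zero =>
    exact ⟨1, 1, fun i j h => by simp [h.ne], by simp, fun i j h => by simp [h.ne'], by simp,
      fun i j h => absurd h (Nat.not_lt_zero _)⟩
  | succ s ih =>
    obtain ⟨L, U, h1, h2, h3, h4, h5⟩ := ih (by omega)
    obtain ⟨L', U', g1, g2, g3, g4, g5⟩ := leuaux_step s (by omega) _ h5
    obtain ⟨a, b⟩ := leuaux_mul_lower L' L g1 h1
    obtain ⟨c, d⟩ := leuaux_mul_lower U'ᵀ Uᵀ (fun i j h => g3 j i h) (fun i j h => h3 j i h)
    rw [← Matrix.transpose_mul] at c d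
    refine ⟨L' * L, U * U', a, fun i => ?_, fun i j h => c j i h, fun i => ?_, ?_⟩
    · rw [b]; exact mul_ne_zero (g2 i) (h2 i)
    · have := d i
      simpa [Matrix.transpose_apply, g4, h4] using this
    · simpa only [Matrix.mul_assoc] using g5

/-- Theorem 1 (existence): every `n×n` matrix with `n = 2^k` has an
LEU-decomposition (with `I = J = 𝟙`). -/
theorem leu_exists_pow_two {F : Type*} [Field F] {n : ℕ} (hn : ∃ k : ℕ, n = 2 ^ k)
    (A : Matrix (Fin n) (Fin n) F) :
    ∃ L E U : Matrix (Fin n) (Fin n) F, IsLEU 1 1 A L E U := by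
  obtain ⟨L, U, h1, h2, h3, h4, h5⟩ := leuaux_main A n le_rfl
  have hLu := (Matrix.isUnit_iff_isUnit_det _).1 (leuaux_unit_lower L h1 h2)
  have hUu := (Matrix.isUnit_iff_isUnit_det _).1
    (leuaux_unit_lower Uᵀ (fun i j h => h3 j i h) (fun i => by simp [h4]))
  rw [Matrix.det_transpose] at hUu
  have hA : A = L⁻¹ * (L * A * U) * U⁻¹ := by
    rw [Matrix.mul_assoc L, Matrix.nonsing_inv_mul_cancel_left _ _ hLu,
      Matrix.mul_nonsing_inv_cancel_right _ _ hUu]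
  generalize L * A * U = E at h5 hA
  have hE : InP E := by
    refine ⟨fun i j => ?_, fun i j k hj hk => ?_, fun i j k hi hk => ?_⟩
    · by_cases h : E i j = 0
      · exact Or.inl h
      · exact Or.inr (h5 i j j.2 h).1
    · by_contra h
      exact hk ((h5 i j j.2 hj).2.1 k (Ne.symm h))
    · by_contra h
      exact hk ((h5 i j j.2 hi).2.2 k (Ne.symm h))
  have hET : InP Eᵀ := ⟨fun i j => hE.1 j i, fun i j k => hE.2.2 j i k, fun i j k => hE.2.1 j i k⟩
  obtain ⟨M, m1, m2, m3, -, m5⟩ := leuaux_fix E L hE h1 h2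
  obtain ⟨V, v1, v2, v3, v4, v5⟩ := leuaux_fix Eᵀ Uᵀ hET (fun i j h => h3 j i h)
    (fun i => by simp [h4])
  refine ⟨M, E, Vᵀ, ?_, hE, m1, m2, fun i j h => v2 j i h, fun i => v4 (fun i => h4 i) i, ?_, ?_⟩
  · have v3' := congrArg Matrix.transpose v3
    simp only [Matrix.transpose_mul, Matrix.transpose_transpose, Matrix.transpose_nonsing_inv] at v3'
    rw [Matrix.mul_assoc, v3', ← Matrix.mul_assoc, m3]
    exact hA
  · unfold InFIJ
    rw [Matrix.one_mul]; exact m5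
  · unfold InFIJ
    rw [Matrix.mul_one]
    have v5' := congrArg Matrix.transpose v5
    simpa only [Matrix.transpose_mul, Matrix.transpose_transpose, Matrix.transpose_sub,
      Matrix.transpose_one] using v5'
end

section
/- Let A be an s×s matrix over F with 2^{k−1} < s < 2^k, let n = 2^k, and let A' be the n×n matrix whose top-left s×s block equals A and whose remaining entries are zero, so that A' ∈ F_{I,J} with I = J = diag(𝟙_s, 0_{n−s}). If (L', E', U') is an LEU-decomposition of A' ∈ F_{I,J}, then L' = diag(L, 𝟙_{n−s}), U' = diag(U, 𝟙_{n−s}), and E' = diag(E, 0_{n−s}) for some s×s matrices L, U, E, and (L, E, U) is an LEU-decomposition of A (with I = J = 𝟙_s). -/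
open Matrix

/-- Extend an `s×s` matrix `M` to an `n×n` matrix having `M` as its top-left
block and `d` on the remaining diagonal positions (zero elsewhere). -/
def ext {F : Type*} [Field F] {s : ℕ} (n : ℕ) (M : Matrix (Fin s) (Fin s) F)
    (d : F) : Matrix (Fin n) (Fin n) F :=
  Matrix.of fun i j =>
    if hi : (i : ℕ) < s then
      (if hj : (j : ℕ) < s then M ⟨i, hi⟩ ⟨j, hj⟩ else 0)
    else (if i = j then d else 0)


section helpers
variable {F : Type*} [Field F] {s n : ℕ}

theorem ext_inj' (h : s ≤ n) (M N : Matrix (Fin s) (Fin s) F) (c d : F)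
    (e : ext n M c = ext n N d) : M = N := by
  ext i j
  have := congrFun (congrFun e ⟨i, by omega⟩) ⟨j, by omega⟩
  simpa [_root_.ext] using this

theorem ext_sub' (M N : Matrix (Fin s) (Fin s) F) (c d : F) :
    ext n M c - ext n N d = ext n (M - N) (c - d) := by
  ext i j
  simp only [_root_.ext, Matrix.sub_apply, Matrix.of_apply]
  split_ifs <;> simp

theorem ext_one' : ext n (1 : Matrix (Fin s) (Fin s) F) 1 = 1 := by
  ext i j
  simp only [_root_.ext, Matrix.of_apply, Matrix.one_apply, Fin.ext_iff]
  split_ifs <;> first | rfl | omega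

theorem ext_diag' : (Matrix.diagonal fun i : Fin n => if (i : ℕ) < s then (1 : F) else 0)
    = ext n (1 : Matrix (Fin s) (Fin s) F) 0 := by
  ext i j
  simp only [_root_.ext, Matrix.of_apply, Matrix.one_apply, Matrix.diagonal_apply, Fin.ext_iff]
  split_ifs <;> first | rfl | omega

theorem ext_tr' (M : Matrix (Fin s) (Fin s) F) (c : F) : (ext n M c)ᵀ = ext n Mᵀ c := by
  ext i j
  simp only [_root_.ext, Matrix.of_apply, Matrix.transpose_apply, Fin.ext_iff]
  split_ifs <;> first | rfl | omega

theorem ext_mul' (h : s ≤ n) (M N : Matrix (Fin s) (Fin s) F) (c d : F) :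
    ext n M c * ext n N d = ext n (M * N) (c * d) := by
  obtain ⟨t, rfl⟩ := Nat.exists_eq_add_of_le h
  ext i j
  rw [Matrix.mul_apply, Fin.sum_univ_add]
  induction i using Fin.addCases <;> induction j using Fin.addCases <;>
    simp [_root_.ext, Matrix.mul_apply, Fin.ext_iff]
  · rename_i i j
    have h1 : ∀ x : Fin s, ¬ (s + (i : ℕ) = x) := fun x => by omega
    have h2 : ∀ x : Fin t, ¬ (s + (x : ℕ) = j) := fun x => by omega
    simp [h1, h2]
  · rename_i i j
    rw [Finset.sum_eq_single i]
    · simp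
    · intro b _ hb
      have h3 : ¬ ((i : ℕ) = b) := fun h => hb (Fin.ext h.symm)
      simp [h3]
    · simp

theorem eq_ext' (M : Matrix (Fin n) (Fin n) F) (h : s ≤ n) (d : F)
    (h1 : ∀ i j : Fin n, ¬ (i : ℕ) < s → M i j = if i = j then d else 0)
    (h2 : ∀ i j : Fin n, (i : ℕ) < s → ¬ (j : ℕ) < s → M i j = 0) :
    M = ext n (M.submatrix (Fin.castLE h) (Fin.castLE h)) d := by
  ext i j
  simp only [_root_.ext, Matrix.of_apply]
  split_ifs with a b c
  · rfl
  · exact h2 i j a b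
  · rw [h1 i j a, if_pos c]
  · rw [h1 i j a, if_neg c]

theorem diag_mul_apply' (f : Fin n → F) (K : Matrix (Fin n) (Fin n) F) (i j)
    (B : Matrix (Fin n) (Fin n) F) (hi : f i = 0) (h : Matrix.diagonal f * B * K = B) :
    B i j = 0 := by
  rw [← h, Matrix.mul_assoc, Matrix.diagonal_mul, hi, zero_mul]

theorem row_zero' (E : Matrix (Fin n) (Fin n) F) (hE : InP E) (i : Fin n)
    (h : (E * Eᵀ) i i ≠ 1) (j) : E i j = 0 := by
  by_contra hj
  apply h
  rw [Matrix.mul_apply, Finset.sum_eq_single j]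
  · have := (hE.1 i j).resolve_left hj
    simp [this]
  · intro b _ hb
    have : E i b = 0 := by
      by_contra hb'
      exact hb (hE.2.1 i b j hb' hj)
    simp [this]
  · simp

theorem InP_tr' (E : Matrix (Fin n) (Fin n) F) (hE : InP E) : InP Eᵀ :=
  ⟨fun i j => hE.1 j i, fun i j k => hE.2.2 i j k |> fun _ a b => hE.2.2 j i k a b,
    fun i j k a b => hE.2.1 j i k a b⟩

theorem low_unit' (L : Matrix (Fin n) (Fin n) F) (h : ∀ i j : Fin n, i < j → L i j = 0) :
    IsUnit L ↔ ∀ i, L i i ≠ 0 := by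
  rw [Matrix.isUnit_iff_isUnit_det, Matrix.det_of_lowerTriangular L (fun i j hij => h i j hij),
    isUnit_iff_ne_zero, Finset.prod_ne_zero_iff]
  simp

/-- Key step: rows beyond `s`. -/
theorem key' (L E : Matrix (Fin n) (Fin n) F) (hE : InP E) (hd : ∀ i, L i i ≠ 0)
    (h : InFIJ (Matrix.diagonal fun i : Fin n => if (i : ℕ) < s then (1 : F) else 0)
      (E * Eᵀ) (L - (1 - E * Eᵀ))) (i : Fin n) (hi : ¬ (i : ℕ) < s) (j : Fin n) :
    E i j = 0 ∧ L i j = if i = j then 1 else 0 := by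
  have hz : ∀ j, (L - (1 - E * Eᵀ)) i j = 0 := fun j =>
    diag_mul_apply' _ _ i j _ (if_neg hi) h
  have hr : ∀ j, E i j = 0 := by
    apply row_zero' E hE i
    intro h1
    have := hz i
    simp only [Matrix.sub_apply, h1, Matrix.one_apply_eq] at this
    exact hd i (by simpa using this)
  refine ⟨hr j, ?_⟩
  have h0 : (E * Eᵀ) i j = 0 := by simp [Matrix.mul_apply, hr]
  have := hz j
  simp only [Matrix.sub_apply, h0, Matrix.one_apply, sub_zero] at this
  exact sub_eq_zero.mp this

theorem leu_red' (hs : s ≤ n) (A : Matrix (Fin s) (Fin s) F)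
    (L' E' U' : Matrix (Fin n) (Fin n) F)
    (hLEU' : IsLEU
      (Matrix.diagonal fun i : Fin n => if (i : ℕ) < s then (1 : F) else 0)
      (Matrix.diagonal fun i : Fin n => if (i : ℕ) < s then (1 : F) else 0)
      (ext n A 0) L' E' U') :
    ∃ L E U : Matrix (Fin s) (Fin s) F,
      L' = ext n L 1 ∧ E' = ext n E 0 ∧ U' = ext n U 1 ∧
      IsLEU 1 1 A L E U := by
  obtain ⟨hA, hE, hL, hLl, hUu, hU1, hIL, hIU⟩ := hLEU'
  have hLd := (low_unit' L' hLl).1 hL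
  have kL := key' (s := s) L' E' hE hLd hIL
  have kU := key' (s := s) U'ᵀ E'ᵀ (InP_tr' _ hE) (by simp [hU1]) (by
    have := congrArg Matrix.transpose hIU
    simpa [InFIJ, Matrix.transpose_mul, Matrix.mul_assoc] using this)
  have hUT : IsUnit U' := by
    rw [← Matrix.isUnit_transpose, low_unit' U'ᵀ (fun i j hij => hUu j i hij)]
    simp [hU1]
  have eL := eq_ext' L' hs 1 (fun i j hi => (kL i hi j).2)
    (fun i j hi hj => hLl i j (by rw [Fin.lt_def]; omega))
  have eE := eq_ext' E' hs 0 (fun i j hi => by simpa using (kL i hi j).1)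
    (fun i j hi hj => (kU j hj i).1)
  have eU := eq_ext' U' hs 1 (fun i j hi => by
      by_cases hj : (j : ℕ) < s
      · rw [hUu i j (by rw [Fin.lt_def]; omega), if_neg (by rintro rfl; exact hi hj)]
      · simpa [eq_comm] using (kU j hj i).2)
    (fun i j hi hj => by
      have := (kU j hj i).2
      rwa [if_neg (by rintro rfl; exact hj hi)] at this)
  refine ⟨_, _, _, eL, eE, eU, ?_⟩
  have hL2 : IsUnit (L'.submatrix (Fin.castLE hs) (Fin.castLE hs)) := by
    rw [low_unit' (L'.submatrix (Fin.castLE hs) (Fin.castLE hs)) (fun i j hij => hLl _ _ hij)]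
    intro i; exact hLd _
  have hU2 : IsUnit (U'.submatrix (Fin.castLE hs) (Fin.castLE hs)) := by
    rw [← Matrix.isUnit_transpose, low_unit' (U'.submatrix (Fin.castLE hs) (Fin.castLE hs))ᵀ
      (fun i j hij => hUu _ _ hij)]
    intro i; simp [hU1]
  have hLAU : L' * ext n A 0 * U' = E' := by
    rw [hA, Matrix.isUnit_iff_isUnit_det] at *
    rw [Matrix.mul_assoc, Matrix.mul_assoc, Matrix.nonsing_inv_mul _ hUT, Matrix.mul_one,
      Matrix.mul_nonsing_inv_cancel_left _ _ hL]
  refine ⟨?_, ⟨fun i j => hE.1 _ _, fun i j k a b => ?_, fun i j k a b => ?_⟩, hL2,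
    fun i j hij => hLl _ _ hij, fun i j hij => hUu _ _ hij, fun i => hU1 _, ?_, ?_⟩
  · rw [eL, eE, eU, ext_mul' hs, ext_mul' hs] at hLAU
    rw [← ext_inj' hs _ _ _ _ hLAU]
    rw [Matrix.isUnit_iff_isUnit_det] at hL2 hU2
    rw [Matrix.mul_assoc, Matrix.mul_assoc, Matrix.mul_assoc, Matrix.mul_nonsing_inv _ hU2,
      Matrix.mul_one, Matrix.nonsing_inv_mul_cancel_left _ _ hL2]
  · exact Fin.castLE_injective hs (hE.2.1 _ _ _ a b)
  · exact Fin.castLE_injective hs (hE.2.2 _ _ _ a b)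
  · unfold InFIJ at hIL ⊢
    rw [ext_diag', eL, eE, ext_tr', ext_mul' hs, ← ext_one' (s := s) (n := n), ext_sub', ext_sub',
      ext_mul' hs, ext_mul' hs] at hIL
    exact ext_inj' hs _ _ _ _ hIL
  · unfold InFIJ at hIU ⊢
    rw [ext_diag', eU, eE, ext_tr', ext_mul' hs, ← ext_one' (s := s) (n := n), ext_sub', ext_sub',
      ext_mul' hs, ext_mul' hs] at hIU
    exact ext_inj' hs _ _ _ _ hIU

end helpers

/-- Theorem 2 (reduction step): let `2^(k-1) < s < 2^k`, `n = 2^k`, and let `A'`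
be the `n×n` matrix with top-left `s×s` block `A` and zeros elsewhere, so that
`A' ∈ F_{I,I}` with `I = diag(𝟙_s, 0)`. If `(L', E', U')` is an
LEU-decomposition of `A'`, then `L' = diag(L, 𝟙)`, `U' = diag(U, 𝟙)`,
`E' = diag(E, 0)` for some `s×s` matrices `L, E, U`, and `(L, E, U)` is an
LEU-decomposition of `A`. -/
theorem leu_reduction {F : Type*} [Field F] {s k : ℕ}
    (hk1 : 2 ^ (k - 1) < s) (hk2 : s < 2 ^ k)
    (A : Matrix (Fin s) (Fin s) F)
    (L' E' U' : Matrix (Fin (2 ^ k)) (Fin (2 ^ k)) F)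
    (hLEU' : IsLEU
      (Matrix.diagonal fun i : Fin (2 ^ k) => if (i : ℕ) < s then (1 : F) else 0)
      (Matrix.diagonal fun i : Fin (2 ^ k) => if (i : ℕ) < s then (1 : F) else 0)
      (ext (2 ^ k) A 0) L' E' U') :
    ∃ L E U : Matrix (Fin s) (Fin s) F,
      L' = ext (2 ^ k) L 1 ∧ E' = ext (2 ^ k) E 0 ∧ U' = ext (2 ^ k) U 1 ∧
      IsLEU 1 1 A L E U := by
  exact leu_red' hk2.le A L' E' U' hLEU'
end

section
/- Every square matrix A of any size s ≥ 1 over a field F admits an LEU-decomposition (with I = J = 𝟙): there exist an invertible lower triangular matrix L, a matrix E ∈ P_s, and an upper triangular matrix U with unit diagonal such that A = L⁻¹ E U⁻¹, L − (𝟙 − I_E) ∈ F_{𝟙, I_E}, and U − (𝟙 − J_E) ∈ F_{J_E, 𝟙}. -/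
open Matrix

theorem leu_diag {F : Type*} [Field F] {n : ℕ} (E : Matrix (Fin n) (Fin n) F) (h : InP E) :
    ∃ d : Fin n → F, E * Eᵀ = Matrix.diagonal d ∧ (∀ i, d i = 0 ∨ d i = 1) ∧
      (∀ i j, d i * E i j = E i j) := by
  classical
  obtain ⟨h01, hr, hc⟩ := h
  refine ⟨fun i => if ∃ j, E i j ≠ 0 then 1 else 0, ?_, ?_, ?_⟩
  · ext i k
    rw [Matrix.mul_apply]
    by_cases hik : i = k
    · subst hik
      simp only [Matrix.diagonal_apply_eq, Matrix.transpose_apply]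
      split_ifs with he
      · obtain ⟨j, hj⟩ := he
        rw [Finset.sum_eq_single j]
        · rcases h01 i j with h | h
          · exact absurd h hj
          · simp [h]
        · intro b _ hb
          by_contra hne
          exact hb (hr i b j (left_ne_zero_of_mul hne) hj)
        · simp
      · push Not at he
        simp [he]
    · rw [Matrix.diagonal_apply_ne _ hik]
      apply Finset.sum_eq_zero
      intro j _
      by_contra hne
      exact hik (hc i j k (left_ne_zero_of_mul hne) (right_ne_zero_of_mul hne))
  · intro i
    dsimp only
    split_ifs <;> simp
  · intro i j
    dsimp only
    split_ifs with he
    · simp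
    · push Not at he
      simp [he]

theorem leu_upper_inv {F : Type*} [Field F] {n : ℕ} (V : Matrix (Fin n) (Fin n) F)
    (hV : ∀ i j, j < i → V i j = 0) (hd : ∀ i, V i i ≠ 0) :
    IsUnit V ∧ (∀ i j, j < i → V⁻¹ i j = 0) ∧ (∀ i, V i i * V⁻¹ i i = 1) := by
  have hb : V.BlockTriangular id := fun i j h => hV i j h
  have hdet : IsUnit V.det := by
    rw [Matrix.det_of_upperTriangular hb, isUnit_iff_ne_zero]
    exact Finset.prod_ne_zero_iff.mpr fun i _ => hd i
  have hu : IsUnit V := (Matrix.isUnit_iff_isUnit_det V).mpr hdet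
  haveI : Invertible V := hu.invertible
  have hi : V⁻¹.BlockTriangular id := Matrix.blockTriangular_inv_of_blockTriangular hb
  have hi' : ∀ i j, j < i → V⁻¹ i j = 0 := fun i j h => hi h
  refine ⟨hu, hi', fun i => ?_⟩
  have := congrFun (congrFun (Matrix.mul_nonsing_inv V hdet) i) i
  rw [Matrix.mul_apply, Finset.sum_eq_single i] at this
  · simpa using this
  · intro b _ hbi
    rcases lt_or_gt_of_ne hbi with h | h
    · rw [hV i b h, zero_mul]
    · rw [hi' b i h, mul_zero]
  · simp

/-- normalised upper factor -/
theorem leu_upper_norm {F : Type*} [Field F] {n : ℕ} (V E : Matrix (Fin n) (Fin n) F)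
    (hV : ∀ i j, j < i → V i j = 0) (hd : ∀ i, V i i ≠ 0) (hE : InP Eᵀ) :
    ∃ U : Matrix (Fin n) (Fin n) F, IsUnit U ∧ (∀ i j, j < i → U i j = 0) ∧
      ((∀ i, V i i = 1) → ∀ i, U i i = 1) ∧ E * V = E * U⁻¹ ∧
      (Eᵀ * E) * (U - (1 - Eᵀ * E)) = U - (1 - Eᵀ * E) := by
  obtain ⟨d, hdE, hd01, hdm⟩ := leu_diag Eᵀ hE
  rw [Matrix.transpose_transpose] at hdE
  rw [hdE]
  set D : Matrix (Fin n) (Fin n) F := Matrix.diagonal d with hD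
  have hED : E * D = E := by
    ext i j
    rw [hD, Matrix.mul_diagonal, mul_comm]
    exact hdm j i
  have hDD : D * D = D := by
    rw [hD, Matrix.diagonal_mul_diagonal]
    congr 1
    ext i
    rcases hd01 i with h | h <;> simp [h]
  set W := D * V + (1 - D) with hW
  have hWe : ∀ i j, W i j = d i * V i j + (if i = j then 1 - d i else 0) := by
    intro i j
    by_cases h : i = j
    · subst h; simp [hW, hD]
    · simp [hW, hD, h]
  have hWt : ∀ i j, j < i → W i j = 0 := by
    intro i j h
    rw [hWe, hV i j h, if_neg h.ne']; simp
  have hWd : ∀ i, W i i ≠ 0 := by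
    intro i
    rw [hWe]
    rcases hd01 i with h | h <;> simp [h, hd i]
  obtain ⟨hu, ht, hdd⟩ := leu_upper_inv W hWt hWd
  have hdet := (Matrix.isUnit_iff_isUnit_det W).mp hu
  refine ⟨W⁻¹, ?_, ht, ?_, ?_, ?_⟩
  · exact (Matrix.isUnit_nonsing_inv_iff).mpr hu
  · intro h1 i
    have h2 := hdd i
    have : W i i = 1 := by rw [hWe, h1]; simp
    rwa [this, one_mul] at h2
  · rw [Matrix.nonsing_inv_nonsing_inv _ hdet, hW, mul_add, ← mul_assoc, hED, mul_sub, hED]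
    simp
  · have h1 : (1 - D) * W = 1 - D := by
      rw [hW]
      have : (1 - D) * (D * V + (1 - D)) = (D - D * D) * V + (1 - D - D + D * D) := by
        noncomm_ring
      rw [this, hDD]; simp
    have h2 : (1 - D) * W⁻¹ = 1 - D := by
      conv_lhs => rw [← h1]
      rw [mul_assoc, Matrix.mul_nonsing_inv _ hdet, mul_one]
    have h3 : D * (W⁻¹ - (1 - D)) = W⁻¹ - (1 - D) * W⁻¹ - (D - D * D) := by noncomm_ring
    rw [h3, h2, hDD]; simp

theorem leu_step {F : Type*} [Field F] {s : ℕ} (A : Matrix (Fin s) (Fin s) F) (k : ℕ)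
    (hk : k ≤ s) :
    ∃ M B V : Matrix (Fin s) (Fin s) F, A = M * B * V ∧
      (∀ i j, i < j → M i j = 0) ∧ (∀ i, M i i ≠ 0) ∧
      (∀ i j, j < i → V i j = 0) ∧ (∀ i, V i i = 1) ∧
      (∀ i j, i.1 < k → B i j = 0 ∨ B i j = 1) ∧
      (∀ i j c, i.1 < k → B i j ≠ 0 → B i c ≠ 0 → j = c) ∧
      (∀ i j r, i.1 < k → B i j ≠ 0 → B r j ≠ 0 → i = r) := by
  classical
  induction k with
  | zero =>
    refine ⟨1, A, 1, by simp, ?_, by simp, ?_, by simp, by simp, by simp, by simp⟩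
    · intro i j h; exact Matrix.one_apply_ne h.ne
    · intro i j h; exact Matrix.one_apply_ne h.ne'
  | succ k ih =>
    obtain ⟨M, B, V, hA, hM, hMd, hV, hVd, h1, h2, h3⟩ := ih (by omega)
    set p : Fin s := ⟨k, by omega⟩ with hp
    have hlt : ∀ i : Fin s, i.1 < k + 1 → i.1 < k ∨ i = p := by
      intro i hi
      rcases Nat.lt_succ_iff_lt_or_eq.mp hi with h | h
      · exact Or.inl h
      · exact Or.inr (Fin.ext h)
    by_cases hz : ∀ j, B p j = 0
    · refine ⟨M, B, V, hA, hM, hMd, hV, hVd, ?_, ?_, ?_⟩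
      · intro i j hi
        rcases hlt i hi with h | rfl
        · exact h1 i j h
        · exact Or.inl (hz j)
      · intro i j c hi hj
        rcases hlt i hi with h | rfl
        · exact h2 i j c h hj
        · exact absurd (hz j) hj
      · intro i j c hi hj
        rcases hlt i hi with h | rfl
        · exact h3 i j c h hj
        · exact absurd (hz j) hj
    · push Not at hz
      obtain ⟨j, hj, hmin⟩ : ∃ j, B p j ≠ 0 ∧ ∀ c, c < j → B p c = 0 := by
        obtain ⟨j, hj, hm⟩ := WellFounded.has_min (wellFounded_lt (α := Fin s))
          {j | B p j ≠ 0} hz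
        exact ⟨j, hj, fun c hc => by_contra fun hne => hm c hne hc⟩
      have hcol : ∀ i : Fin s, i.1 < k → B i j = 0 := by
        intro i hi
        by_contra hne
        have := h3 i j p hi hne hj
        rw [this] at hi
        simp [hp] at hi
      set a := B p j with ha
      let l : Fin s → F := fun i => if i = p then a - 1 else B i j
      let u : Fin s → F := fun c => if c = j then 0 else B p c / a
      let C : Matrix (Fin s) (Fin s) F := fun i c =>
        if c = j then (if i = p then 1 else 0) else B i c - B i j * B p c / a
      have hl : ∀ i : Fin s, i < p → l i = 0 := by
        intro i hi
        simp only [l, if_neg hi.ne]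
        exact hcol i hi
      have hu : ∀ c, c ≤ j → u c = 0 := by
        intro c hc
        simp only [u]
        split_ifs with h
        · rfl
        · rw [hmin c (lt_of_le_of_ne hc h), zero_div]
      have hmulM : ∀ X : Matrix (Fin s) (Fin s) F, ∀ i c,
          ((1 + Matrix.vecMulVec l (Pi.single p 1)) * X) i c = X i c + l i * X p c := by
        intro X i c
        rw [add_mul, one_mul, Matrix.add_apply, Matrix.mul_apply]
        simp [Matrix.vecMulVec_apply, Pi.single_apply]
      have hmulM' : ∀ X : Matrix (Fin s) (Fin s) F, ∀ i c,
          (X * (1 + Matrix.vecMulVec l (Pi.single p 1))) i c =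
            X i c + (∑ r, X i r * l r) * (if c = p then 1 else 0) := by
        intro X i c
        rw [mul_add, mul_one, Matrix.add_apply, Matrix.mul_apply, Finset.sum_mul]
        simp [Matrix.vecMulVec_apply, Pi.single_apply]
      have hmulV : ∀ X : Matrix (Fin s) (Fin s) F, ∀ i c,
          (X * (1 + Matrix.vecMulVec (Pi.single j 1) u)) i c = X i c + X i j * u c := by
        intro X i c
        rw [mul_add, mul_one, Matrix.add_apply, Matrix.mul_apply]
        simp [Matrix.vecMulVec_apply, Pi.single_apply]
      have hmulV' : ∀ X : Matrix (Fin s) (Fin s) F, ∀ i c,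
          ((1 + Matrix.vecMulVec (Pi.single j 1) u) * X) i c =
            X i c + (if i = j then 1 else 0) * ∑ r, u r * X r c := by
        intro X i c
        rw [add_mul, one_mul, Matrix.add_apply, Matrix.mul_apply, Finset.mul_sum]
        simp [Matrix.vecMulVec_apply, Pi.single_apply]
      have hB : B = (1 + Matrix.vecMulVec l (Pi.single p 1)) *
          (C * (1 + Matrix.vecMulVec (Pi.single j 1) u)) := by
        ext i c
        rw [hmulM, hmulV, hmulV]
        simp only [C, l, u]
        by_cases hc : c = j <;> by_cases hi : i = p
        · subst hc hi; simp [← ha]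
        · subst hc; simp [hi]
        · subst hi; simp [hc, ← ha]; field_simp; ring
        · simp [hc, hi, ← ha]; field_simp; ring
      have hsumM : ∀ i : Fin s, i < p → ∑ r, M i r * l r = 0 := by
        intro i hi
        apply Finset.sum_eq_zero
        intro r _
        rcases lt_or_ge r p with h | h
        · rw [hl r h, mul_zero]
        · rw [hM i r (lt_of_lt_of_le hi h), zero_mul]
      have hsumV : ∀ c, c ≤ j → ∑ r, u r * V r c = 0 := by
        intro c hc
        apply Finset.sum_eq_zero
        intro r _
        rcases le_or_gt r j with h | h
        · rw [hu r h, zero_mul]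
        · rw [hV r c (lt_of_le_of_lt hc h), mul_zero]
      have hCrow : ∀ i c, i.1 < k → C i c = B i c := by
        intro i c hi
        have hip : i ≠ p := by rintro rfl; simp [hp] at hi
        simp only [C, if_neg hip, hcol i hi]
        split_ifs with h
        · rw [h, hcol i hi]
        · simp
      have hCp : ∀ c, C p c = if c = j then 1 else 0 := by
        intro c
        simp only [C, ← ha]
        split_ifs
        · rfl
        · field_simp; ring
      refine ⟨M * (1 + Matrix.vecMulVec l (Pi.single p 1)), C,
        (1 + Matrix.vecMulVec (Pi.single j 1) u) * V, ?_, ?_, ?_, ?_, ?_, ?_, ?_, ?_⟩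
      · rw [hA]
        conv_lhs => rw [hB]
        simp only [mul_assoc]
      · intro i c hic
        rw [hmulM', hM i c hic]
        split_ifs with h
        · subst h; rw [hsumM i hic]; simp
        · simp
      · intro i
        rw [hmulM']
        split_ifs with h
        · subst h
          rw [Finset.sum_eq_single p]
          · simp only [l, if_true]
            have : M p p + M p p * (a - 1) * 1 = M p p * a := by ring
            rw [this]
            exact mul_ne_zero (hMd p) hj
          · intro r _ hr
            rcases lt_or_gt_of_ne hr with h | h
            · rw [hl r h, mul_zero]
            · rw [hM _ r h, zero_mul]
          · simp
        · simpa using hMd i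
      · intro i c hic
        rw [hmulV', hV i c hic]
        split_ifs with h
        · subst h; rw [hsumV c hic.le]; simp
        · simp
      · intro i
        rw [hmulV', hVd i]
        split_ifs with h
        · rw [hsumV i h.le]; simp
        · simp
      · intro i c hi
        rcases hlt i hi with h | rfl
        · rw [hCrow i c h]; exact h1 i c h
        · rw [hCp]; split_ifs <;> simp
      · intro i c c' hi hc hc'
        rcases hlt i hi with h | h
        · rw [hCrow i _ h] at hc hc'; exact h2 i c c' h hc hc'
        · rw [h, hCp] at hc hc'
          simp at hc hc'
          rw [hc, hc']
      · intro i c r hi hc hr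
        rcases hlt i hi with h | h
        · rw [hCrow i _ h] at hc
          have hcj : c ≠ j := by rintro rfl; exact hc (hcol i h)
          have hpc : B p c = 0 := by
            by_contra hne
            have := h3 i c p h hc hne
            rw [this] at h
            simp [hp] at h
          simp only [C, if_neg hcj, hpc] at hr
          exact h3 i c r h hc (by simpa using hr)
        · rw [h, hCp] at hc
          simp at hc
          simp only [C, hc, if_true] at hr
          rw [h]
          by_contra hne
          exact hr (if_neg (fun h => hne h.symm))

theorem leu_exists {F : Type*} [Field F] {s : ℕ} (hs : 1 ≤ s)
    (A : Matrix (Fin s) (Fin s) F) :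
    ∃ L E U : Matrix (Fin s) (Fin s) F, IsLEU 1 1 A L E U := by
  obtain ⟨M, E, V, hA, hM, hMd, hV, hVd, h1, h2, h3⟩ := leu_step A s le_rfl
  have hE : InP E := ⟨fun i j => h1 i j i.2, fun i j c => h2 i j c i.2, fun i j r => h3 i j r i.2⟩
  have hEt : InP Eᵀ := ⟨fun i j => hE.1 j i, fun i j c => hE.2.2 j i c, fun i j r => hE.2.1 j i r⟩
  obtain ⟨U, hU, hUt, hUd, hUE, hUF⟩ := leu_upper_norm V E hV (fun i => by simp [hVd i]) hEt
  obtain ⟨L, hL, hLt, -, hLE, hLF⟩ := leu_upper_norm Mᵀ Eᵀ (fun i j h => hM j i h)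
    (fun i => hMd i) (by simpa using hE)
  refine ⟨Lᵀ, E, U, ?_, hE, ?_, fun i j h => hLt j i h, hUt, hUd hVd, ?_, ?_⟩
  · have h := congrArg Matrix.transpose hLE
    simp only [Matrix.transpose_mul, Matrix.transpose_transpose, Matrix.transpose_nonsing_inv] at h
    rw [hA, h, mul_assoc, hUE, mul_assoc]
  · exact (Matrix.isUnit_transpose _).mpr hL
  · have h := congrArg Matrix.transpose hLF
    simpa [InFIJ, Matrix.transpose_mul, Matrix.transpose_sub] using h
  · simpa [InFIJ] using hUF
end

section
/- Let A be an invertible n×n matrix over a field F and let (L, E, U) be an LEU-decomposition of A. Then E is a permutation matrix (has exactly one 1 in every row and every column) and A⁻¹ = U Eᵀ L. -/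
open Matrix

/-- A permutation matrix (an element of `S_n`). -/
def IsPermMat {F : Type*} [Field F] {m : Type*} [DecidableEq m]
    (M : Matrix m m F) : Prop :=
  ∃ σ : Equiv.Perm m, ∀ i j, M i j = if σ i = j then 1 else 0

/-- If `A` is invertible and `(L,E,U)` is an LEU-decomposition of `A`, then `E`
is a permutation matrix and `A⁻¹ = U Eᵀ L`. -/
theorem leu_inverse {F : Type*} [Field F] {n : ℕ} (hn : 0 < n)
    (A L E U : Matrix (Fin n) (Fin n) F) (hA : IsUnit A)
    (hLEU : IsLEU 1 1 A L E U) :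
    IsPermMat E ∧ A⁻¹ = U * Eᵀ * L := by
  obtain ⟨hA1, ⟨h01, hr, hc⟩, hL, -, -, -, -, -⟩ := hLEU
  have hdA : A.det ≠ 0 := ((Matrix.isUnit_iff_isUnit_det A).1 hA).ne_zero
  have hdL : IsUnit L.det := (Matrix.isUnit_iff_isUnit_det L).1 hL
  have hd := hdA
  rw [hA1, Matrix.det_mul, Matrix.det_mul] at hd
  have hdE : E.det ≠ 0 := fun h => hd (by rw [h]; ring)
  have hdU' : (U⁻¹).det ≠ 0 := fun h => hd (by rw [h]; ring)
  have hdU : IsUnit U.det := by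
    rw [isUnit_iff_ne_zero]
    intro h
    apply hdU'
    rw [Matrix.det_nonsing_inv, h, Ring.inverse_zero]
  have hrow : ∀ i, ∃ j, E i j ≠ 0 := by
    intro i
    by_contra hcon
    push Not at hcon
    exact hdE (Matrix.det_eq_zero_of_row_eq_zero i hcon)
  choose f hf using hrow
  have hinj : Function.Injective f := by
    intro a b hab
    refine hc a (f a) b (hf a) ?_
    rw [hab]
    exact hf b
  have hE : ∀ i j, E i j = if f i = j then 1 else 0 := by
    intro i j
    split_ifs with h
    · subst h
      exact (h01 i (f i)).resolve_left (hf i)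
    · by_contra h0
      exact h (hr i _ _ (hf i) h0)
  have hEE : E * Eᵀ = 1 := by
    ext i j
    simp only [Matrix.mul_apply, Matrix.transpose_apply, hE, Matrix.one_apply]
    simp [hinj.eq_iff, eq_comm]
  refine ⟨⟨Equiv.ofBijective f (Finite.injective_iff_bijective.1 hinj), fun i j => by
    simpa using hE i j⟩, ?_⟩
  apply Matrix.inv_eq_right_inv
  rw [hA1]
  calc L⁻¹ * E * U⁻¹ * (U * Eᵀ * L) = L⁻¹ * (E * ((U⁻¹ * U) * Eᵀ)) * L := by
        simp only [Matrix.mul_assoc]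
    _ = 1 := by
        rw [Matrix.nonsing_inv_mul U hdU, Matrix.one_mul, hEE, Matrix.mul_one,
          Matrix.nonsing_inv_mul L hdL]
end
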